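/- Let K be a field and n ≥ 0. Write e_1, …, e_n for the standard basis of K^n, and l_i = l_{e_i}, r_i = r_{e_i}. Then the images in U(K^n) of the following monomials form a K-vector-space basis of U(K^n): the element 1; the elements l_i and r_i for 1 ≤ i ≤ n; the elements r_i·l_i for 1 ≤ i ≤ n; the elements l_i·r_j, r_i·l_j, and r_i·r_j for 1 ≤ i < j ≤ n; and, for each k ≥ 3 and each strictly increasing sequence i_1 < i_2 < ⋯ < i_k in {1,…,n}, the two monomials r_{i_1}·r_{i_2}·⋯·r_{i_{k−1}}·r_{i_k} and r_{i_1}·r_{i_2}·⋯·r_{i_{k−1}}·l_{i_k}. -/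

import Mathlib

/-!
Universal enveloping algebra of the abelian alternative algebra `K^n`.

`T = Tens_K(K^n ⊕ K^n)`; `l_a` (resp. `r_a`) is the image of `(a,0)` (resp. `(0,a)`).
`U(K^n)` is the quotient of `T` by the two-sided ideal generated by
`l_a·l_a`, `r_a·r_a`, `l_b·l_a + r_a·r_b`, `r_b·l_a − l_a·r_b − r_a·r_b`.
-/

noncomputable section

/-- `l_a ∈ Tens_K(K^n ⊕ K^n)`. -/
def lT (K : Type) [CommRing K] (n : ℕ) (a : Fin n → K) :
    TensorAlgebra K ((Fin n → K) × (Fin n → K)) :=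
  TensorAlgebra.ι K (a, 0)

/-- `r_a ∈ Tens_K(K^n ⊕ K^n)`. -/
def rT (K : Type) [CommRing K] (n : ℕ) (a : Fin n → K) :
    TensorAlgebra K ((Fin n → K) × (Fin n → K)) :=
  TensorAlgebra.ι K (0, a)

/-- The relations defining `U(K^n)`: quotienting by this relation is the same as
quotienting by the two-sided ideal generated by the listed elements. -/
inductive URel (K : Type) [CommRing K] (n : ℕ) :
    TensorAlgebra K ((Fin n → K) × (Fin n → K)) →
    TensorAlgebra K ((Fin n → K) × (Fin n → K)) → Prop
  | ll (a : Fin n → K) : URel K n (lT K n a * lT K n a) 0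
  | rr (a : Fin n → K) : URel K n (rT K n a * rT K n a) 0
  | llrr (a b : Fin n → K) : URel K n (lT K n b * lT K n a + rT K n a * rT K n b) 0
  | rl (a b : Fin n → K) :
      URel K n (rT K n b * lT K n a - lT K n a * rT K n b - rT K n a * rT K n b) 0

/-- The universal enveloping algebra `U(K^n)`. -/
def Ualg (K : Type) [CommRing K] (n : ℕ) : Type := RingQuot (URel K n)

instance (K : Type) [CommRing K] (n : ℕ) : Ring (Ualg K n) :=
  inferInstanceAs (Ring (RingQuot (URel K n)))

instance (K : Type) [CommRing K] (n : ℕ) : Algebra K (Ualg K n) :=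
  inferInstanceAs (Algebra K (RingQuot (URel K n)))

/-- Image of `l_a` in `U(K^n)`. -/
def lU (K : Type) [CommRing K] (n : ℕ) (a : Fin n → K) : Ualg K n :=
  RingQuot.mkAlgHom K (URel K n) (lT K n a)

/-- Image of `r_a` in `U(K^n)`. -/
def rU (K : Type) [CommRing K] (n : ℕ) (a : Fin n → K) : Ualg K n :=
  RingQuot.mkAlgHom K (URel K n) (rT K n a)

/-- The weight-one part `V ⊆ U(K^n)`: the span of all `l_a` and `r_a`. -/
def V (K : Type) [CommRing K] (n : ℕ) : Submodule K (Ualg K n) :=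
  Submodule.span K (Set.range (lU K n) ∪ Set.range (rU K n))


/-- The standard basis vector `e_i` of `K^n`. -/
def stdBasis (K : Type) [CommRing K] (n : ℕ) (i : Fin n) : Fin n → K :=
  Pi.single i 1

/-- Index type for the claimed basis of `U(K^n)`:
* `one`: the element `1`;
* `gen i b`: `r_i` (if `b = true`) or `l_i` (if `b = false`), for `1 ≤ i ≤ n`;
* `rl i`: `r_i · l_i`, for `1 ≤ i ≤ n`;
* `two i j h t`: `l_i·r_j`, `r_i·l_j`, `r_i·r_j` (as `t = 0, 1, 2`) for `i < j`;
* `seq k hk f hf b`: for `k ≥ 3` and a strictly increasing sequence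
  `f : Fin k → Fin n`, the monomial `r_{f 1} ⋯ r_{f (k-1)} · r_{f k}` (if `b = true`)
  or `r_{f 1} ⋯ r_{f (k-1)} · l_{f k}` (if `b = false`). -/
inductive BIdx (n : ℕ) : Type
  | one : BIdx n
  | gen : Fin n → Bool → BIdx n
  | rl : Fin n → BIdx n
  | two : (i j : Fin n) → i < j → Fin 3 → BIdx n
  | seq : (k : ℕ) → 3 ≤ k → (f : Fin k → Fin n) → StrictMono f → Bool → BIdx n

/-- The element of `U(K^n)` indexed by `BIdx n`. -/
def basisElem (K : Type) [CommRing K] (n : ℕ) : BIdx n → Ualg K n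
  | .one => 1
  | .gen i b => if b then rU K n (stdBasis K n i) else lU K n (stdBasis K n i)
  | .rl i => rU K n (stdBasis K n i) * lU K n (stdBasis K n i)
  | .two i j _ t =>
      if t = 0 then lU K n (stdBasis K n i) * rU K n (stdBasis K n j)
      else if t = 1 then rU K n (stdBasis K n i) * lU K n (stdBasis K n j)
      else rU K n (stdBasis K n i) * rU K n (stdBasis K n j)
  | .seq k _ f _ b =>
      (List.ofFn fun t : Fin k =>
        if b = false ∧ t.val = k - 1 then lU K n (stdBasis K n (f t))
        else rU K n (stdBasis K n (f t))).prod

/-!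
The relations make the `r_a` anticommute with square zero, so they generate an image of the exterior
algebra `Λ(K^n)`, and they let every `l` be moved to the right, where `l_a l_b = r_a r_b`. Hence
`U(K^n) = P + P·L`, with `P` the image of `Λ(K^n)` and `L` the span of the `l_a`. Moreover
`r_a r_b l_c` is alternating in `a, b, c`, which sorts the words `r ⋯ r l` of length at least three;
those of length two are `r_i l_j`, and for `i > j` one has `r_i l_j = l_j r_i + r_j r_i`.

Two representations give independence. Sending `l_a` to `a ⊗ 1` and `r_a` to `1 ⊗ a` in a tensor
square of the square-zero extension `K ⊕ K^n` separates the products `l_i r_j`, `r_i l_j` from each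
other and kills the rest. Sending `r_a` and `l_a` to `a ⊗ S` and `a ⊗ D` in `Λ(K^n) ⊗ M₂(K)`, where
`S² = D² = 1` and `S D + D S = -1`, separates the remaining monomials: the exterior factor records
the letters, and `S^(k-1) S` and `S^(k-1) D` are linearly independent.
-/

theorem linearIndependent_of_dual_eq_ite {R M ι α β : Type*} [Ring R] [AddCommGroup M]
    [Module R M] [DecidableEq α] [DecidableEq β] {v : ι → M} {code : ι → α ⊕ β}
    (hcode : Function.Injective code) (φ : α → M →ₗ[R] R) (ψ : β → M →ₗ[R] R)
    (hφ : ∀ a x, φ a (v x) = if code x = .inl a then 1 else 0)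
    (hψ : ∀ b x c, code x = .inr c → ψ b (v x) = if c = b then 1 else 0) :
    LinearIndependent R v := by
  rw [linearIndependent_iff']
  intro t g hsum
  have hsum_dual (χ : M →ₗ[R] R) : ∑ y ∈ t, g y * χ (v y) = 0 := by
    simpa only [map_sum, map_smul, smul_eq_mul, map_zero] using congrArg χ hsum
  have hinl : ∀ x ∈ t, ∀ a, code x = .inl a → g x = 0 := by
    intro x hx a hxa
    have h := hsum_dual (φ a)
    rwa [Finset.sum_eq_single_of_mem x hx fun y _ hyx ↦ ?_, hφ, if_pos hxa, mul_one] at h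
    rw [hφ, if_neg fun hya ↦ hyx (hcode (hya.trans hxa.symm)), mul_zero]
  have hinr : ∀ x ∈ t, ∀ b, code x = .inr b → g x = 0 := by
    intro x hx b hxb
    have h := hsum_dual (ψ b)
    rwa [Finset.sum_eq_single_of_mem x hx fun y hy hyx ↦ ?_, hψ b x b hxb, if_pos rfl,
      mul_one] at h
    rcases hy_code : code y with a | c
    · rw [hinl y hy a hy_code, zero_mul]
    · have hcb : c ≠ b := by
        rintro rfl
        exact hyx (hcode (hy_code.trans hxb.symm))
      rw [hψ b y c hy_code, if_neg hcb, mul_zero]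
  intro x hx
  rcases hx_code : code x with a | b
  exacts [hinl x hx a hx_code, hinr x hx b hx_code]

section SortedWords

variable {α : Type*}

theorem sortedLT_nil [Preorder α] : ([] : List α).SortedLT := by
  simp [List.sortedLT_iff_pairwise]

theorem sortedLT_singleton [Preorder α] (i : α) : [i].SortedLT := by
  simp [List.sortedLT_iff_pairwise]

theorem sortedLT_pair [Preorder α] {i j : α} : [i, j].SortedLT ↔ i < j := by
  simp [List.sortedLT_iff_pairwise]

theorem sortedLT_append_singleton [Preorder α] {u : List α} {c : α} :
    (u ++ [c]).SortedLT ↔ u.SortedLT ∧ ∀ i ∈ u, i < c := by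
  simp [List.sortedLT_iff_pairwise, List.pairwise_append]

theorem toFinset_inj_of_sortedLT [LinearOrder α] {u w : List α} (hu : u.SortedLT)
    (hw : w.SortedLT) : u.toFinset = w.toFinset ↔ u = w :=
  ⟨fun h ↦ hu.eq_of_mem_iff hw fun a ↦ by simpa using Finset.ext_iff.1 h a, congrArg _⟩

end SortedWords

theorem exteriorAlgebra_ι_mul_ι_comm {R M : Type*} [CommRing R] [AddCommGroup M] [Module R M]
    (x y : M) :
    ExteriorAlgebra.ι R x * ExteriorAlgebra.ι R y =
      -(ExteriorAlgebra.ι R y * ExteriorAlgebra.ι R x) :=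
  eq_neg_of_add_eq_zero_left (ExteriorAlgebra.ι_add_mul_swap x y)

section ExteriorBasis

variable {R M I : Type*} [CommRing R] [AddCommGroup M] [Module R M] [LinearOrder I]
  (b : Module.Basis I R M)

theorem exteriorAlgebra_basis_toFinset {w : List I} (hw : w.SortedLT) :
    b.ExteriorAlgebra w.toFinset = (w.map fun i ↦ ExteriorAlgebra.ι R (b i)).prod := by
  have hcard : w.toFinset.card = w.length := List.toFinset_card_of_nodup hw.nodup
  rw [ExteriorAlgebra.basis_apply_ofCard b hcard, ExteriorAlgebra.ιMulti_family,
    ExteriorAlgebra.ιMulti_apply]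
  congr 1
  have hsort : w.toFinset.sort = w := (List.toFinset_sort _ hw.nodup).2 hw.sortedLE.pairwise
  refine List.ext_getElem (by simp) fun i _ _ ↦ ?_
  simp [Set.powersetCard.ofFinEmbEquiv_symm_apply, Finset.orderEmbOfFin_apply, hsort]

theorem exteriorAlgebra_basis_singleton (c : I) :
    b.ExteriorAlgebra {c} = ExteriorAlgebra.ι R (b c) := by
  simpa using exteriorAlgebra_basis_toFinset b (sortedLT_singleton c)

theorem exteriorAlgebra_basis_mul_ι_of_mem {s : Finset I} {c : I} (hc : c ∈ s) :
    b.ExteriorAlgebra s * ExteriorAlgebra.ι R (b c) = 0 := by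
  rw [← exteriorAlgebra_basis_singleton]
  exact ExteriorAlgebra.basis_mul_of_not_disjoint b (Set.powersetCard.ofCard (s := s) rfl)
    (Set.powersetCard.ofCard (Finset.card_singleton c)) (by simpa using hc)

theorem exists_exteriorAlgebra_basis_mul_ι_eq {s : Finset I} {c : I} (hc : c ∉ s) :
    ∃ ε : ℤˣ, b.ExteriorAlgebra s * ExteriorAlgebra.ι R (b c) =
      ε • b.ExteriorAlgebra (insert c s) := by
  have hdisj : Disjoint s {c} := by simpa using hc
  have hunion : s.disjUnion {c} hdisj = insert c s := by
    rw [Finset.disjUnion_eq_union, Finset.union_singleton]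
  rw [← exteriorAlgebra_basis_singleton, ← hunion]
  exact ⟨_, ExteriorAlgebra.basis_mul_of_disjoint b (Set.powersetCard.ofCard (s := s) rfl)
    (Set.powersetCard.ofCard (Finset.card_singleton c)) hdisj⟩

end ExteriorBasis

namespace Ualg

variable {K : Type} [CommRing K] {n : ℕ}

section Presentation

variable (K n) in
/-- The quotient map from the tensor algebra onto `U(K^n)`. -/
def mk : TensorAlgebra K ((Fin n → K) × (Fin n → K)) →ₐ[K] Ualg K n :=
  RingQuot.mkAlgHom K (URel K n)

theorem mk_lT (a : Fin n → K) : mk K n (lT K n a) = lU K n a := rfl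

theorem mk_rT (a : Fin n → K) : mk K n (rT K n a) = rU K n a := rfl

theorem mk_surjective : Function.Surjective (mk K n) :=
  RingQuot.mkAlgHom_surjective K (URel K n)

theorem mk_eq_of_rel {x y : TensorAlgebra K ((Fin n → K) × (Fin n → K))} (h : URel K n x y) :
    mk K n x = mk K n y :=
  RingQuot.mkAlgHom_rel K h

variable (K n) in
/-- The linear map `a ↦ l_a`. -/
def lLin : (Fin n → K) →ₗ[K] Ualg K n :=
  (mk K n).toLinearMap ∘ₗ TensorAlgebra.ι K ∘ₗ LinearMap.inl K _ _

variable (K n) in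
/-- The linear map `a ↦ r_a`. -/
def rLin : (Fin n → K) →ₗ[K] Ualg K n :=
  (mk K n).toLinearMap ∘ₗ TensorAlgebra.ι K ∘ₗ LinearMap.inr K _ _

theorem lLin_apply (a : Fin n → K) : lLin K n a = lU K n a := rfl

theorem rLin_apply (a : Fin n → K) : rLin K n a = rU K n a := rfl

theorem rU_mul_self (a : Fin n → K) : rU K n a * rU K n a = 0 := by
  simpa [mk_rT] using mk_eq_of_rel (URel.rr a)

theorem rU_mul_rU_comm (a b : Fin n → K) : rU K n a * rU K n b = -(rU K n b * rU K n a) := by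
  have h := rU_mul_self (a + b)
  rw [← rLin_apply, map_add, rLin_apply, rLin_apply, add_mul, mul_add, mul_add, rU_mul_self,
    rU_mul_self, zero_add, add_zero] at h
  exact eq_neg_of_add_eq_zero_left h

theorem lU_mul_lU (a b : Fin n → K) : lU K n a * lU K n b = rU K n a * rU K n b := by
  have h : lU K n a * lU K n b + rU K n b * rU K n a = 0 := by
    simpa [mk_lT, mk_rT] using mk_eq_of_rel (URel.llrr b a)
  rw [eq_neg_of_add_eq_zero_left h, ← rU_mul_rU_comm]

theorem lU_mul_rU (a b : Fin n → K) :
    lU K n a * rU K n b = rU K n b * lU K n a - rU K n a * rU K n b := by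
  have h : rU K n b * lU K n a - lU K n a * rU K n b - rU K n a * rU K n b = 0 := by
    simpa [mk_lT, mk_rT] using mk_eq_of_rel (URel.rl a b)
  rw [sub_right_comm, sub_eq_zero] at h
  exact h.symm

theorem lU_mul_rU_mul_rU (a b c : Fin n → K) :
    lU K n a * (rU K n b * rU K n c) = rU K n b * rU K n c * lU K n a := by
  rw [← mul_assoc, lU_mul_rU, sub_mul, mul_assoc, lU_mul_rU, rU_mul_rU_comm a b]
  noncomm_ring

theorem rU_mul_rU_mul_lU_rotate (a b c : Fin n → K) :
    rU K n a * rU K n b * lU K n c = rU K n c * rU K n a * lU K n b :=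
  calc rU K n a * rU K n b * lU K n c
    _ = lU K n c * (lU K n a * lU K n b) := by rw [← lU_mul_rU_mul_rU, lU_mul_lU]
    _ = rU K n c * rU K n a * lU K n b := by rw [← mul_assoc, lU_mul_lU]

theorem rU_mul_rU_mul_lU_swap (a b c : Fin n → K) :
    rU K n a * rU K n b * lU K n c = -(rU K n a * rU K n c * lU K n b) := by
  rw [rU_mul_rU_mul_lU_rotate, rU_mul_rU_comm, neg_mul]

theorem rU_mul_rU_mul_lU_self (a b : Fin n → K) : rU K n a * rU K n b * lU K n b = 0 := by
  rw [← rU_mul_rU_mul_lU_rotate, rU_mul_self, zero_mul]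

theorem adjoin_range_lU_union_range_rU :
    Algebra.adjoin K (Set.range (lU K n) ∪ Set.range (rU K n)) = ⊤ := by
  have hmap : (⊤ : Subalgebra K (Ualg K n)) =
      (Algebra.adjoin K (Set.range (TensorAlgebra.ι K))).map (mk K n) := by
    rw [TensorAlgebra.adjoin_range_ι, Algebra.map_top, (AlgHom.range_eq_top _).2 mk_surjective]
  rw [eq_top_iff, hmap, AlgHom.map_adjoin]
  refine Algebra.adjoin_le ?_
  rintro _ ⟨_, ⟨⟨a, b⟩, rfl⟩, rfl⟩
  have hab : mk K n (TensorAlgebra.ι K (a, b)) = lU K n a + rU K n b := by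
    rw [← mk_lT, ← mk_rT, ← map_add, lT, rT, ← map_add, Prod.mk_add_mk, add_zero, zero_add]
  rw [hab]
  exact add_mem (Algebra.subset_adjoin (.inl ⟨a, rfl⟩)) (Algebra.subset_adjoin (.inr ⟨b, rfl⟩))

theorem submodule_eq_top_of_mul_mem {N : Submodule K (Ualg K n)} (hone : 1 ∈ N)
    (hl : ∀ x ∈ N, ∀ a, x * lU K n a ∈ N) (hr : ∀ x ∈ N, ∀ a, x * rU K n a ∈ N) : N = ⊤ := by
  have hmul : ∀ y : Ualg K n, ∀ x ∈ N, x * y ∈ N := by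
    intro y
    have hy : y ∈ Algebra.adjoin K (Set.range (lU K n) ∪ Set.range (rU K n)) :=
      adjoin_range_lU_union_range_rU (K := K) (n := n) ▸ Algebra.mem_top
    induction hy using Algebra.adjoin_induction with
    | mem y hy =>
      rcases hy with ⟨a, rfl⟩ | ⟨a, rfl⟩
      exacts [fun x hx ↦ hl x hx a, fun x hx ↦ hr x hx a]
    | algebraMap c =>
      intro x hx
      rw [← Algebra.commutes, ← Algebra.smul_def]
      exact N.smul_mem c hx
    | add y z _ _ ihy ihz => exact fun x hx ↦ mul_add x y z ▸ N.add_mem (ihy x hx) (ihz x hx)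
    | mul y z _ _ ihy ihz => exact fun x hx ↦ mul_assoc x y z ▸ ihz _ (ihy x hx)
  exact eq_top_iff.2 fun y _ ↦ one_mul y ▸ hmul y 1 hone

/-- The universal property of `U(K^n)`: a pair of linear maps satisfying the defining relations
extends to an algebra homomorphism. -/
def lift {A : Type*} [Ring A] [Algebra K A] (L R : (Fin n → K) →ₗ[K] A)
    (hll : ∀ a, L a * L a = 0) (hrr : ∀ a, R a * R a = 0)
    (hllrr : ∀ a b, L b * L a + R a * R b = 0)
    (hrl : ∀ a b, R b * L a - L a * R b - R a * R b = 0) : Ualg K n →ₐ[K] A :=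
  RingQuot.liftAlgHom K ⟨TensorAlgebra.lift K (L.coprod R), by
    rintro _ _ (a | a | ⟨a, b⟩ | ⟨a, b⟩)
    · simpa [lT] using hll a
    · simpa [rT] using hrr a
    · simpa [lT, rT] using hllrr a b
    · simpa [lT, rT] using hrl a b⟩

section

variable {A : Type*} [Ring A] [Algebra K A] (L R : (Fin n → K) →ₗ[K] A) (hll hrr hllrr hrl)

theorem lift_lU (a : Fin n → K) : lift L R hll hrr hllrr hrl (lU K n a) = L a :=
  (RingQuot.liftAlgHom_mkAlgHom_apply K _ _ _).trans (by simp [lT])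

theorem lift_rU (a : Fin n → K) : lift L R hll hrr hllrr hrl (rU K n a) = R a :=
  (RingQuot.liftAlgHom_mkAlgHom_apply K _ _ _).trans (by simp [rT])

end

end Presentation

section Words

variable (K) in
/-- The monomial `r_{i_1} ⋯ r_{i_k}` attached to the word `i_1, …, i_k`. -/
def rWord (w : List (Fin n)) : Ualg K n :=
  (w.map fun i ↦ rU K n (stdBasis K n i)).prod

theorem rWord_append (u w : List (Fin n)) : rWord K (u ++ w) = rWord K u * rWord K w := by
  simp [rWord]

theorem rWord_singleton (i : Fin n) : rWord K [i] = rU K n (stdBasis K n i) := by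
  simp [rWord]

theorem basisElem_seq_true {k : ℕ} (hk : 3 ≤ k) (f : Fin k → Fin n) (hf : StrictMono f) :
    basisElem K n (.seq k hk f hf true) = rWord K (List.ofFn f) := by
  simp [basisElem, rWord, List.map_ofFn, Function.comp_def]

theorem basisElem_seq_false {k : ℕ} (hk : 3 ≤ k + 1) (f : Fin (k + 1) → Fin n)
    (hf : StrictMono f) :
    basisElem K n (.seq (k + 1) hk f hf false) =
      rWord K (List.ofFn fun t : Fin k ↦ f t.castSucc) *
        lU K n (stdBasis K n (f (Fin.last k))) := by
  simp only [basisElem, List.ofFn_succ', List.concat_eq_append, List.prod_append]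
  simp [rWord, List.map_ofFn, Function.comp_def, fun t : Fin k ↦ t.isLt.ne]

theorem rWord_mem_range_basisElem {w : List (Fin n)} (hw : w.SortedLT) :
    rWord K w ∈ Set.range (basisElem K n) := by
  match w, hw with
  | [], _ => exact ⟨.one, by simp [basisElem, rWord]⟩
  | [i], _ => exact ⟨.gen i true, by simp [basisElem, rWord]⟩
  | [i, j], hw =>
    exact ⟨.two i j (sortedLT_pair.1 hw) 2, by simp [basisElem, rWord]⟩
  | i :: j :: k :: v, hw =>
    exact ⟨.seq _ (by simp) _ hw.strictMono_get true, by rw [basisElem_seq_true, List.ofFn_get]⟩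

theorem rWord_mul_lU_mem_range_basisElem {u : List (Fin n)} {c : Fin n}
    (huc : (u ++ [c]).SortedLT) :
    rWord K u * lU K n (stdBasis K n c) ∈ Set.range (basisElem K n) := by
  match u, huc with
  | [], _ => exact ⟨.gen c false, by simp [basisElem, rWord]⟩
  | [i], huc =>
    exact ⟨.two i c (sortedLT_pair.1 huc) 1, by simp [basisElem, rWord]⟩
  | i :: j :: v, huc =>
    have hf : StrictMono (Fin.snoc (α := fun _ ↦ Fin n) (i :: j :: v).get c) := by
      rw [← List.sortedLT_ofFn_iff, List.ofFn_succ', List.concat_eq_append]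
      simpa using huc
    exact ⟨.seq _ (by simp) _ hf false, by rw [basisElem_seq_false]; simp⟩

end Words

section Span

variable (K n) in
/-- The homomorphism from the exterior algebra of `K^n` onto the subalgebra of `U(K^n)` generated
by the `r_a`. -/
def ofExterior : ExteriorAlgebra K (Fin n → K) →ₐ[K] Ualg K n :=
  ExteriorAlgebra.lift K ⟨rLin K n, rU_mul_self⟩

theorem ofExterior_ι (a : Fin n → K) : ofExterior K n (ExteriorAlgebra.ι K a) = rU K n a :=
  ExteriorAlgebra.lift_ι_apply K _ _ a

theorem ofExterior_basis_toFinset {w : List (Fin n)} (hw : w.SortedLT) :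
    ofExterior K n ((Pi.basisFun K (Fin n)).ExteriorAlgebra w.toFinset) = rWord K w := by
  simp [exteriorAlgebra_basis_toFinset _ hw, map_list_prod, rWord, ofExterior_ι, stdBasis,
    Function.comp_def]

theorem range_ofExterior :
    (ofExterior K n).toLinearMap.range = Submodule.span K {x | ∃ w : List (Fin n),
      w.SortedLT ∧ rWord K w = x} := by
  rw [LinearMap.range_eq_map, ← (Pi.basisFun K (Fin n)).ExteriorAlgebra.span_eq,
    Submodule.map_span]
  congr 1
  ext x
  constructor
  · rintro ⟨_, ⟨s, rfl⟩, rfl⟩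
    refine ⟨s.sort, s.sortedLT_sort, ?_⟩
    rw [← ofExterior_basis_toFinset s.sortedLT_sort, Finset.sort_toFinset]
    rfl
  · rintro ⟨w, hw, rfl⟩
    exact ⟨_, ⟨_, rfl⟩, ofExterior_basis_toFinset hw⟩

theorem range_lLin :
    (lLin K n).range = Submodule.span K (Set.range fun i ↦ lU K n (stdBasis K n i)) := by
  rw [LinearMap.range_eq_map, ← (Pi.basisFun K (Fin n)).span_eq, Submodule.map_span,
    ← Set.range_comp]
  simp [Function.comp_def, lLin_apply, stdBasis]

theorem range_ofExterior_sup_mul_range_lLin :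
    (ofExterior K n).toLinearMap.range ⊔ (ofExterior K n).toLinearMap.range * (lLin K n).range =
      ⊤ := by
  set P := (ofExterior K n).toLinearMap.range
  set L := (lLin K n).range
  have hP_mul : ∀ x ∈ P, ∀ a, x * rU K n a ∈ P := by
    rintro _ ⟨y, rfl⟩ a
    exact ⟨y * ExteriorAlgebra.ι K a, by simp [ofExterior_ι]⟩
  have hP_mul_lU : ∀ x ∈ P, ∀ a, x * lU K n a ∈ P * L := fun x hx a ↦
    Submodule.mul_mem_mul hx ⟨a, rfl⟩
  have hmul_mem (y : Ualg K n) (hP : ∀ x ∈ P, x * y ∈ P ⊔ P * L)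
      (hPL : ∀ x ∈ P, ∀ a, x * lU K n a * y ∈ P ⊔ P * L) :
      ∀ x ∈ P ⊔ P * L, x * y ∈ P ⊔ P * L := by
    suffices P ⊔ P * L ≤ (P ⊔ P * L).comap (LinearMap.mulRight K y) from this
    refine sup_le hP (Submodule.mul_le.2 ?_)
    rintro x hx _ ⟨a, rfl⟩
    exact hPL x hx a
  refine submodule_eq_top_of_mul_mem (Submodule.mem_sup_left ⟨1, map_one (ofExterior K n)⟩)
    (fun x hx b ↦ hmul_mem _ (fun x hx ↦ ?_) (fun x hx a ↦ ?_) x hx)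
    (fun x hx b ↦ hmul_mem _ (fun x hx ↦ ?_) (fun x hx a ↦ ?_) x hx)
  · exact Submodule.mem_sup_right (hP_mul_lU x hx b)
  · rw [mul_assoc, lU_mul_lU, ← mul_assoc]
    exact Submodule.mem_sup_left (hP_mul _ (hP_mul x hx a) b)
  · exact Submodule.mem_sup_left (hP_mul x hx b)
  · rw [mul_assoc, lU_mul_rU, mul_sub, ← mul_assoc, ← mul_assoc]
    exact sub_mem (Submodule.mem_sup_right (hP_mul_lU _ (hP_mul x hx b) a))
      (Submodule.mem_sup_left (hP_mul _ (hP_mul x hx a) b))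

theorem rU_mul_lU_mem_span_basisElem (i c : Fin n) :
    rU K n (stdBasis K n i) * lU K n (stdBasis K n c) ∈
      Submodule.span K (Set.range (basisElem K n)) := by
  rcases lt_trichotomy i c with hic | rfl | hci
  · exact Submodule.subset_span ⟨.two i c hic 1, by simp [basisElem]⟩
  · exact Submodule.subset_span ⟨.rl i, rfl⟩
  · rw [sub_eq_iff_eq_add.1 (lU_mul_rU _ _).symm]
    exact add_mem (Submodule.subset_span ⟨.two c i hci 0, by simp [basisElem]⟩)
      (Submodule.subset_span ⟨.two c i hci 2, by simp [basisElem]⟩)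

theorem rWord_mul_rU_of_mem {u : List (Fin n)} (hu : u.SortedLT) {c : Fin n} (hc : c ∈ u) :
    rWord K u * rU K n (stdBasis K n c) = 0 := by
  have h := exteriorAlgebra_basis_mul_ι_of_mem (Pi.basisFun K (Fin n)) (List.mem_toFinset.2 hc)
  simpa [ofExterior_basis_toFinset hu, ofExterior_ι, stdBasis] using congrArg (ofExterior K n) h

theorem exists_rWord_mul_rU_eq {u : List (Fin n)} (hu : u.SortedLT) {c : Fin n} (hc : c ∉ u) :
    ∃ ε : ℤˣ, rWord K u * rU K n (stdBasis K n c) =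
      ε • rWord K (insert c u.toFinset).sort := by
  obtain ⟨ε, h⟩ := exists_exteriorAlgebra_basis_mul_ι_eq (Pi.basisFun K (Fin n))
    (mt List.mem_toFinset.1 hc)
  refine ⟨ε, ?_⟩
  rw [← ofExterior_basis_toFinset hu, ← ofExterior_basis_toFinset (Finset.sortedLT_sort _),
    Finset.sort_toFinset, ← ofExterior_ι, stdBasis, ← Pi.basisFun_apply, ← map_mul, h]
  simp [Units.smul_def]

theorem rWord_append_mul_lU_swap {u : List (Fin n)} (hu : u ≠ []) (d c : Fin n) :
    rWord K (u ++ [d]) * lU K n (stdBasis K n c) =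
      -(rWord K u * rU K n (stdBasis K n c) * lU K n (stdBasis K n d)) := by
  obtain ⟨v, i, rfl⟩ := u.eq_nil_or_concat'.resolve_left hu
  simp only [rWord_append, rWord_singleton]
  rw [mul_assoc, mul_assoc, ← mul_assoc (rU _ _ _), rU_mul_rU_mul_lU_swap]
  noncomm_ring

theorem rWord_append_mul_lU_self {u : List (Fin n)} (hu : u ≠ []) (d : Fin n) :
    rWord K (u ++ [d]) * lU K n (stdBasis K n d) = 0 := by
  obtain ⟨v, i, rfl⟩ := u.eq_nil_or_concat'.resolve_left hu
  simp only [rWord_append, rWord_singleton]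
  rw [mul_assoc, mul_assoc, ← mul_assoc (rU _ _ _), rU_mul_rU_mul_lU_self, mul_zero]

theorem rWord_mul_rU_mul_lU_mem_span_basisElem {u : List (Fin n)} {c d : Fin n}
    (hud : (u ++ [d]).SortedLT) (hcd : c < d) :
    rWord K u * rU K n (stdBasis K n c) * lU K n (stdBasis K n d) ∈
      Submodule.span K (Set.range (basisElem K n)) := by
  obtain ⟨hu, hu_lt⟩ := sortedLT_append_singleton.1 hud
  by_cases hc : c ∈ u
  · rw [rWord_mul_rU_of_mem hu hc, zero_mul]
    exact zero_mem _
  obtain ⟨ε, hε⟩ := exists_rWord_mul_rU_eq (K := K) hu hc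
  have hsorted : ((insert c u.toFinset).sort ++ [d]).SortedLT :=
    sortedLT_append_singleton.2 ⟨Finset.sortedLT_sort _, by simpa [hcd] using hu_lt⟩
  rw [hε, smul_mul_assoc, Units.smul_def]
  exact zsmul_mem (Submodule.subset_span (rWord_mul_lU_mem_range_basisElem hsorted)) _

theorem rWord_mul_lU_mem_span_basisElem {w : List (Fin n)} (hw : w.SortedLT) (c : Fin n) :
    rWord K w * lU K n (stdBasis K n c) ∈ Submodule.span K (Set.range (basisElem K n)) := by
  rcases w.eq_nil_or_concat' with rfl | ⟨u, d, rfl⟩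
  · exact Submodule.subset_span (rWord_mul_lU_mem_range_basisElem (sortedLT_singleton c))
  rcases eq_or_ne u [] with rfl | hu
  · simpa only [List.nil_append, rWord_singleton] using rU_mul_lU_mem_span_basisElem d c
  rcases lt_trichotomy c d with hcd | rfl | hdc
  · rw [rWord_append_mul_lU_swap hu]
    exact neg_mem (rWord_mul_rU_mul_lU_mem_span_basisElem hw hcd)
  · rw [rWord_append_mul_lU_self hu]
    exact zero_mem _
  · have hud := (sortedLT_append_singleton.1 hw).2
    refine Submodule.subset_span (rWord_mul_lU_mem_range_basisElem
      (sortedLT_append_singleton.2 ⟨hw, ?_⟩))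
    simpa [or_imp, forall_and, hdc] using fun i hi ↦ (hud i hi).trans hdc

theorem span_basisElem : Submodule.span K (Set.range (basisElem K n)) = ⊤ := by
  rw [eq_top_iff, ← range_ofExterior_sup_mul_range_lLin, range_ofExterior, range_lLin,
    Submodule.span_mul_span]
  refine sup_le (Submodule.span_mono ?_) (Submodule.span_le.2 ?_)
  · rintro _ ⟨w, hw, rfl⟩
    exact rWord_mem_range_basisElem hw
  · rintro _ ⟨_, ⟨w, hw, rfl⟩, _, ⟨c, rfl⟩, rfl⟩
    exact rWord_mul_lU_mem_span_basisElem hw c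

end Span

section WordFunctionals

open scoped TensorProduct

variable (K) in
/-- The matrix coefficient of `r_a` in `toExteriorMatrix`. -/
def rMatrix : Matrix (Fin 2) (Fin 2) K := !![0, 1; 1, 0]

variable (K) in
/-- The matrix coefficient of `l_a` in `toExteriorMatrix`, an involution that anticommutes with
`rMatrix` up to `-1`, as the relations of `U(K^n)` require. -/
def lMatrix : Matrix (Fin 2) (Fin 2) K := !![1, 0; -1, -1]

theorem rMatrix_mul_self : rMatrix K * rMatrix K = 1 := by
  simp [rMatrix, Matrix.one_fin_two]

theorem rMatrix_pow_mul_pow (k : ℕ) : rMatrix K ^ k * rMatrix K ^ k = 1 := by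
  rw [← (Commute.refl _).mul_pow, rMatrix_mul_self, one_pow]

theorem lMatrix_mul_self : lMatrix K * lMatrix K = 1 := by
  simp [lMatrix, Matrix.one_fin_two]

theorem rMatrix_mul_lMatrix : rMatrix K * lMatrix K = -(lMatrix K * rMatrix K) - 1 := by
  simp [rMatrix, lMatrix, Matrix.one_fin_two]

variable (K n) in
/-- The representation of `U(K^n)` by `2 × 2` matrices over the exterior algebra of `K^n`, written
as a tensor product. -/
def toExteriorMatrix :
    Ualg K n →ₐ[K] ExteriorAlgebra K (Fin n → K) ⊗[K] Matrix (Fin 2) (Fin 2) K :=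
  lift ((TensorProduct.mk K _ _).flip (lMatrix K) ∘ₗ ExteriorAlgebra.ι K)
    ((TensorProduct.mk K _ _).flip (rMatrix K) ∘ₗ ExteriorAlgebra.ι K)
    (fun a ↦ by simp)
    (fun a ↦ by simp)
    (fun a b ↦ by
      simp [lMatrix_mul_self, rMatrix_mul_self, exteriorAlgebra_ι_mul_ι_comm b a,
        TensorProduct.neg_tmul])
    (fun a b ↦ by
      simp [rMatrix_mul_lMatrix, rMatrix_mul_self, exteriorAlgebra_ι_mul_ι_comm b a,
        TensorProduct.neg_tmul, TensorProduct.tmul_neg, TensorProduct.tmul_sub])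

theorem toExteriorMatrix_lU (a : Fin n → K) :
    toExteriorMatrix K n (lU K n a) = ExteriorAlgebra.ι K a ⊗ₜ lMatrix K :=
  lift_lU _ _ _ _ _ _ a

theorem toExteriorMatrix_rU (a : Fin n → K) :
    toExteriorMatrix K n (rU K n a) = ExteriorAlgebra.ι K a ⊗ₜ rMatrix K :=
  lift_rU _ _ _ _ _ _ a

theorem toExteriorMatrix_rWord (w : List (Fin n)) :
    toExteriorMatrix K n (rWord K w) =
      (w.map fun i ↦ ExteriorAlgebra.ι K (Pi.basisFun K (Fin n) i)).prod ⊗ₜ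
        (rMatrix K ^ w.length) := by
  induction w with
  | nil => simp [rWord, Algebra.TensorProduct.one_def]
  | cons i w ih =>
    rw [← List.singleton_append, rWord_append, map_mul, ih, rWord_singleton, toExteriorMatrix_rU]
    simp [stdBasis, pow_succ']

variable (K) in
/-- The coordinate functional of the standard monomial with letters in `c.1`, ending in an `r` or
an `l` according to `c.2`. The factor `rMatrix ^ (#c.1 + 1)` cancels all letters but the last,
because `rMatrix` is an involution; `r` and `l` are then told apart by the first row of the matrix,
which is `(0, 1)` for `rMatrix` and `(1, 0)` for `lMatrix`. -/
def wordFunctional (c : Finset (Fin n) × Bool) : Ualg K n →ₗ[K] K :=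
  TensorProduct.dualDistrib K _ _ ((Pi.basisFun K (Fin n)).ExteriorAlgebra.coord c.1 ⊗ₜ
    (Matrix.entryLinearMap K K 0 (if c.2 then 1 else 0) ∘ₗ
      LinearMap.mulLeft K (rMatrix K ^ (c.1.card + 1)))) ∘ₗ (toExteriorMatrix K n).toLinearMap

theorem wordFunctional_apply {x : Ualg K n} {s : Finset (Fin n)} {X : Matrix (Fin 2) (Fin 2) K}
    (hx : toExteriorMatrix K n x = (Pi.basisFun K (Fin n)).ExteriorAlgebra s ⊗ₜ X)
    (c : Finset (Fin n) × Bool) :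
    wordFunctional K c x =
      if s = c.1 then (rMatrix K ^ (s.card + 1) * X) 0 (if c.2 then 1 else 0) else 0 := by
  obtain ⟨t, b⟩ := c
  rw [wordFunctional, LinearMap.comp_apply, AlgHom.toLinearMap_apply, hx,
    TensorProduct.dualDistrib_apply]
  rcases eq_or_ne s t with rfl | hst
  · simp
  · simp [hst]

theorem wordFunctional_rWord (c : Finset (Fin n) × Bool) {w : List (Fin n)} (hw : w.SortedLT) :
    wordFunctional K c (rWord K w) = if (w.toFinset, true) = c then 1 else 0 := by
  have hmatrix : rMatrix K ^ (w.length + 1) * rMatrix K ^ w.length = rMatrix K := by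
    rw [pow_succ', mul_assoc, rMatrix_pow_mul_pow, mul_one]
  have hw_map := toExteriorMatrix_rWord (K := K) w
  rw [← exteriorAlgebra_basis_toFinset _ hw] at hw_map
  rw [wordFunctional_apply hw_map, List.toFinset_card_of_nodup hw.nodup, hmatrix]
  obtain ⟨t, _ | _⟩ := c <;> simp [rMatrix]

theorem wordFunctional_rWord_mul_lU (c : Finset (Fin n) × Bool) {u : List (Fin n)} {i : Fin n}
    (hui : (u ++ [i]).SortedLT) :
    wordFunctional K c (rWord K u * lU K n (stdBasis K n i)) =
      if ((u ++ [i]).toFinset, false) = c then 1 else 0 := by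
  have hmatrix : rMatrix K ^ (u.length + 1 + 1) * (rMatrix K ^ u.length * lMatrix K) =
      lMatrix K := by
    rw [pow_succ, pow_succ, mul_assoc (_ ^ _), rMatrix_mul_self, mul_one, ← mul_assoc,
      rMatrix_pow_mul_pow, one_mul]
  have hui_map : toExteriorMatrix K n (rWord K u * lU K n (stdBasis K n i)) =
      (Pi.basisFun K (Fin n)).ExteriorAlgebra (u ++ [i]).toFinset ⊗ₜ
        (rMatrix K ^ u.length * lMatrix K) := by
    rw [exteriorAlgebra_basis_toFinset _ hui, map_mul, toExteriorMatrix_rWord,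
      toExteriorMatrix_lU]
    simp [stdBasis]
  rw [wordFunctional_apply hui_map, List.toFinset_card_of_nodup hui.nodup, List.length_append,
    List.length_singleton, hmatrix]
  obtain ⟨t, _ | _⟩ := c <;> simp [lMatrix]

end WordFunctionals

section MixedFunctionals

open scoped TensorProduct

variable (K n) in
/-- The representation of `U(K^n)` in which the `l_a` commute with the `r_a` and all products
`l_a l_b` and `r_a r_b` vanish. -/
def toTrivSqZeroExt :
    Ualg K n →ₐ[K] TrivSqZeroExt K (Fin n → K) ⊗[K] TrivSqZeroExt K (Fin n → K) :=
  lift ((TensorProduct.mk K _ _).flip 1 ∘ₗ TrivSqZeroExt.inrHom K (Fin n → K))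
    (TensorProduct.mk K _ _ 1 ∘ₗ TrivSqZeroExt.inrHom K (Fin n → K))
    (fun a ↦ by simp) (fun a ↦ by simp) (fun a b ↦ by simp) (fun a b ↦ by simp)

theorem toTrivSqZeroExt_lU (a : Fin n → K) :
    toTrivSqZeroExt K n (lU K n a) = TrivSqZeroExt.inr a ⊗ₜ 1 :=
  lift_lU _ _ _ _ _ _ a

theorem toTrivSqZeroExt_rU (a : Fin n → K) :
    toTrivSqZeroExt K n (rU K n a) = 1 ⊗ₜ TrivSqZeroExt.inr a :=
  lift_rU _ _ _ _ _ _ a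

variable (K) in
/-- The functional detecting the products `l_i r_j` and `r_j l_i` for `c = (i, j)`. -/
def mixedFunctional (c : Fin n × Fin n) : Ualg K n →ₗ[K] K :=
  TensorProduct.dualDistrib K _ _
    ((LinearMap.proj c.1 ∘ₗ TrivSqZeroExt.sndHom K (Fin n → K)) ⊗ₜ
      (LinearMap.proj c.2 ∘ₗ TrivSqZeroExt.sndHom K (Fin n → K))) ∘ₗ
    (toTrivSqZeroExt K n).toLinearMap

theorem mixedFunctional_apply {x : Ualg K n} {y z : TrivSqZeroExt K (Fin n → K)}
    (hx : toTrivSqZeroExt K n x = y ⊗ₜ z) (c : Fin n × Fin n) :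
    mixedFunctional K c x = y.snd c.1 * z.snd c.2 := by
  simp [mixedFunctional, hx]

theorem mixedFunctional_lU_mul_rU (c : Fin n × Fin n) (i j : Fin n) :
    mixedFunctional K c (lU K n (stdBasis K n i) * rU K n (stdBasis K n j)) =
      if (i, j) = c then 1 else 0 := by
  rw [mixedFunctional_apply (y := .inr (stdBasis K n i)) (z := .inr (stdBasis K n j))
    (by simp [toTrivSqZeroExt_lU, toTrivSqZeroExt_rU])]
  simp [stdBasis, Pi.single_apply, Prod.ext_iff, ← ite_and, and_comm, eq_comm]

theorem mixedFunctional_rU_mul_lU (c : Fin n × Fin n) (i j : Fin n) :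
    mixedFunctional K c (rU K n (stdBasis K n i) * lU K n (stdBasis K n j)) =
      if (j, i) = c then 1 else 0 := by
  rw [mixedFunctional_apply (y := .inr (stdBasis K n j)) (z := .inr (stdBasis K n i))
    (by simp [toTrivSqZeroExt_lU, toTrivSqZeroExt_rU])]
  simp [stdBasis, Pi.single_apply, Prod.ext_iff, ← ite_and, and_comm, eq_comm]

theorem mixedFunctional_lU (c : Fin n × Fin n) (a : Fin n → K) :
    mixedFunctional K c (lU K n a) = 0 := by
  rw [mixedFunctional_apply (toTrivSqZeroExt_lU a), TrivSqZeroExt.snd_one, Pi.zero_apply, mul_zero]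

theorem toTrivSqZeroExt_rWord (w : List (Fin n)) :
    toTrivSqZeroExt K n (rWord K w) =
      1 ⊗ₜ (w.map fun i ↦ TrivSqZeroExt.inr (stdBasis K n i)).prod := by
  induction w with
  | nil => simp [rWord, Algebra.TensorProduct.one_def]
  | cons i w ih =>
    rw [← List.singleton_append, rWord_append, map_mul, ih, rWord_singleton, toTrivSqZeroExt_rU]
    simp

theorem mixedFunctional_rWord (c : Fin n × Fin n) (w : List (Fin n)) :
    mixedFunctional K c (rWord K w) = 0 := by
  rw [mixedFunctional_apply (toTrivSqZeroExt_rWord w), TrivSqZeroExt.snd_one, Pi.zero_apply,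
    zero_mul]

theorem mixedFunctional_rWord_mul (c : Fin n × Fin n) {w : List (Fin n)} (hw : 2 ≤ w.length)
    (x : Ualg K n) : mixedFunctional K c (rWord K w * x) = 0 := by
  have hzero : toTrivSqZeroExt K n (rWord K w) = 0 := by
    match w, hw with
    | i :: j :: v, _ => simp [toTrivSqZeroExt_rWord, ← mul_assoc]
  simp [mixedFunctional, hzero]

end MixedFunctionals

section LinearIndependence

/-- The detecting functional attached to a basis element: `inl (i, j)` stands for
`mixedFunctional` and marks the products `l_i r_j` and `r_j l_i`, while `inr (s, b)` stands for
`wordFunctional` and marks the other standard monomials by their set of letters `s` and, as in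
`BIdx`, the type `b` of their last letter. -/
def basisCode : BIdx n → Fin n × Fin n ⊕ Finset (Fin n) × Bool
  | .one => .inr ([].toFinset, true)
  | .gen i b => .inr ([i].toFinset, b)
  | .rl i => .inl (i, i)
  | .two i j _ 0 => .inl (i, j)
  | .two i j _ 1 => .inl (j, i)
  | .two i j _ 2 => .inr ([i, j].toFinset, true)
  | .seq _ _ f _ b => .inr ((List.ofFn f).toFinset, b)

theorem basisCode_injective : Function.Injective (basisCode (n := n)) := by
  rintro (_ | ⟨i, b⟩ | i | ⟨i, j, hij, t⟩ | ⟨k, hk, f, hf, b⟩)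
    (_ | ⟨i', b'⟩ | i' | ⟨i', j', hij', t'⟩ | ⟨k', hk', f', hf', b'⟩) h
  all_goals try fin_cases t
  all_goals try fin_cases t'
  all_goals simp only [basisCode, Sum.inr.injEq, Sum.inl.injEq, Prod.mk.injEq, reduceCtorEq, *,
    toFinset_inj_of_sortedLT, sortedLT_nil, sortedLT_singleton, sortedLT_pair,
    StrictMono.sortedLT_ofFn] at h
  case seq.seq =>
    obtain ⟨hword, rfl⟩ := h
    cases List.ofFn_inj'.1 hword
    rfl
  all_goals grind [List.length_ofFn]

theorem mixedFunctional_basisElem (c : Fin n × Fin n) (x : BIdx n) :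
    mixedFunctional K c (basisElem K n x) = if basisCode x = .inl c then 1 else 0 := by
  rcases x with _ | ⟨i, _ | _⟩ | i | ⟨i, j, hij, t⟩ | ⟨k, hk, f, hf, _ | _⟩
  · simpa [basisElem, basisCode, rWord] using mixedFunctional_rWord c []
  · simpa [basisElem, basisCode] using mixedFunctional_lU c (stdBasis K n i)
  · simpa [basisElem, basisCode, rWord_singleton] using mixedFunctional_rWord (K := K) c [i]
  · simpa [basisElem, basisCode] using mixedFunctional_rU_mul_lU (K := K) c i i
  · fin_cases t
    · simpa [basisElem, basisCode] using mixedFunctional_lU_mul_rU (K := K) c i j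
    · simpa [basisElem, basisCode] using mixedFunctional_rU_mul_lU (K := K) c i j
    · simpa [basisElem, basisCode, rWord] using mixedFunctional_rWord (K := K) c [i, j]
  · obtain ⟨k, rfl⟩ := Nat.exists_eq_add_of_le' (Nat.one_le_of_lt hk)
    rw [basisElem_seq_false, mixedFunctional_rWord_mul c (by simpa using hk)]
    simp [basisCode]
  · rw [basisElem_seq_true, mixedFunctional_rWord]
    simp [basisCode]

theorem wordFunctional_basisElem (c : Finset (Fin n) × Bool) {x : BIdx n}
    {d : Finset (Fin n) × Bool} (hx : basisCode x = .inr d) :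
    wordFunctional K c (basisElem K n x) = if d = c then 1 else 0 := by
  rcases x with _ | ⟨i, _ | _⟩ | i | ⟨i, j, hij, t⟩ | ⟨k, hk, f, hf, _ | _⟩
  · cases hx
    exact wordFunctional_rWord c sortedLT_nil
  · cases hx
    simpa [basisElem, rWord] using
      wordFunctional_rWord_mul_lU (K := K) (u := []) c (sortedLT_singleton i)
  · cases hx
    simpa only [basisElem, rWord_singleton, if_true] using
      wordFunctional_rWord (K := K) c (sortedLT_singleton i)
  · cases hx
  · fin_cases t <;> cases hx
    simpa [basisElem, rWord] using wordFunctional_rWord (K := K) c (sortedLT_pair.2 hij)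
  · cases hx
    obtain ⟨k, rfl⟩ := Nat.exists_eq_add_of_le' (Nat.one_le_of_lt hk)
    have hsorted := hf.sortedLT_ofFn
    rw [List.ofFn_succ', List.concat_eq_append] at hsorted ⊢
    rw [basisElem_seq_false, wordFunctional_rWord_mul_lU c hsorted]
  · cases hx
    rw [basisElem_seq_true, wordFunctional_rWord c hf.sortedLT_ofFn]

theorem linearIndependent_basisElem : LinearIndependent K (basisElem K n) :=
  linearIndependent_of_dual_eq_ite basisCode_injective (mixedFunctional K) (wordFunctional K)
    mixedFunctional_basisElem fun c _ _ ↦ wordFunctional_basisElem c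

end LinearIndependence

end Ualg

theorem basis_Ualg_general (K : Type) [CommRing K] (n : ℕ) :
    LinearIndependent K (basisElem K n) ∧
      Submodule.span K (Set.range (basisElem K n)) = ⊤ :=
  ⟨Ualg.linearIndependent_basisElem, Ualg.span_basisElem⟩

/-- For `K` a field, the images in `U(K^n)` of the monomials
`1`; `l_i`, `r_i`; `r_i·l_i`; `l_i·r_j`, `r_i·l_j`, `r_i·r_j` for `i < j`; and
`r_{i_1}⋯r_{i_{k-1}}·r_{i_k}`, `r_{i_1}⋯r_{i_{k-1}}·l_{i_k}` for `k ≥ 3` and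
`i_1 < ⋯ < i_k`, form a `K`-vector-space basis of `U(K^n)`. -/
theorem basis_Ualg (K : Type) [Field K] (n : ℕ) :
    LinearIndependent K (basisElem K n) ∧
      Submodule.span K (Set.range (basisElem K n)) = ⊤ :=
  basis_Ualg_general K n

end
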